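/- Pointwise strong small-set expansion bounds: for every n ≥ 1 and all measurable sets A ⊆ 𝒳ⁿ, B ⊆ 𝒴ⁿ with P_X^{⊗n}(A) > 0 and P_Y^{⊗n}(B) > 0, setting α := −(1/n) log P_X^{⊗n}(A) and β := −(1/n) log P_Y^{⊗n}(B), one has Θ̲(α,β) ≤ −(1/n) log P_{XY}^{⊗n}(A × B); moreover −(1/n) log P_{XY}^{⊗n}(A × B) ≤ φ̂(α,β) if α > 0 and β > 0, −(1/n) log P_{XY}^{⊗n}(A × B) ≤ α if β = 0, and −(1/n) log P_{XY}^{⊗n}(A × B) ≤ β if α = 0. -/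

import Mathlib

open MeasureTheory ProbabilityTheory Set Filter
open scoped ENNReal NNReal BigOperators Classical Topology

noncomputable section

namespace BL

variable {X : Type*} {Y : Type*} [MeasurableSpace X] [MeasurableSpace Y]

/-! ### Extended logarithm, exponential, and division conventions -/

/-- Extended logarithm `ℝ≥0∞ → EReal`, with `log 0 = ⊥` and `log ⊤ = ⊤`. -/
def elog (x : ℝ≥0∞) : EReal :=
  if x = 0 then ⊥ else if x = ⊤ then ⊤ else ((Real.log x.toReal : ℝ) : EReal)

/-- Extended exponential `EReal → ℝ≥0∞`, with `exp ⊥ = 0` and `exp ⊤ = ⊤`. -/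
def eexp (x : EReal) : ℝ≥0∞ :=
  if x = ⊥ then 0 else if x = ⊤ then ⊤ else ENNReal.ofReal (Real.exp x.toReal)

/-- Division of an extended real by a real, with the conventions `a/0 = +∞` for `a > 0`,
`a/0 = -∞` for `a < 0` and `0/0 = 0`. -/
def ediv (x : EReal) (c : ℝ) : EReal :=
  if c = 0 then (if 0 < x then ⊤ else if x < 0 then ⊥ else 0)
  else x * ((c⁻¹ : ℝ) : EReal)

/-- Division of a real by an extended real, with the convention `t/(±∞) = 0`. -/
def divE (t : ℝ) (r : EReal) : EReal :=
  if r = ⊤ ∨ r = ⊥ then 0 else ((t / r.toReal : ℝ) : EReal)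

/-- Hölder conjugate, as an extended real (`conj 1 = ⊤`). -/
def conj (q : ℝ) : EReal := if q = 1 then ⊤ else ((q / (q - 1) : ℝ) : EReal)

/-! ### Norms with a real (possibly negative) exponent -/

/-- `p`-"norm" of an `ℝ≥0∞`-valued function (`p` a nonzero real). -/
def enorm (P : Measure X) (F : X → ℝ≥0∞) (p : ℝ) : ℝ≥0∞ :=
  (∫⁻ x, F x ^ p ∂P) ^ (1 / p)

/-- `∞`-norm (essential supremum) of an `ℝ≥0∞`-valued function. -/
def enormInf (P : Measure X) (F : X → ℝ≥0∞) : ℝ≥0∞ := essSup F P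

/-- `p`-"norm" of a nonnegative real-valued function. -/
def rnorm (P : Measure X) (f : X → ℝ) (p : ℝ) : ℝ≥0∞ :=
  enorm P (fun x => ENNReal.ofReal (f x)) p

/-- `∞`-norm of a nonnegative real-valued function. -/
def rnormInf (P : Measure X) (f : X → ℝ) : ℝ≥0∞ :=
  enormInf P (fun x => ENNReal.ofReal (f x))

/-! ### Divergences -/

/-- Kullback--Leibler divergence, valued in `EReal` (equal to `⊤` when undefined). -/
def KL (Q P : Measure X) : EReal :=
  if Q ≪ P ∧ Integrable (fun x => Real.log (Q.rnDeriv P x).toReal) Q then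
    ((∫ x, Real.log (Q.rnDeriv P x).toReal ∂Q : ℝ) : EReal)
  else ⊤

/-- Rényi divergence of order `s` (`s = 1` gives the KL divergence). -/
def Renyi (s : ℝ) (Q P : Measure X) : EReal :=
  if s = 1 then KL Q P
  else (((s - 1)⁻¹ : ℝ) : EReal) *
    elog (∫⁻ x, Q.rnDeriv (Q + P) x ^ s * P.rnDeriv (Q + P) x ^ (1 - s) ∂(Q + P))

/-- First marginal of a measure on a product space. -/
def m1 (P : Measure (X × Y)) : Measure X := P.map Prod.fst

/-- Second marginal of a measure on a product space. -/
def m2 (P : Measure (X × Y)) : Measure Y := P.map Prod.snd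

/-- Couplings of a pair of (probability) measures. -/
def couplings (μ : Measure X) (ν : Measure Y) : Set (Measure (X × Y)) :=
  {π | IsProbabilityMeasure π ∧ π.map Prod.fst = μ ∧ π.map Prod.snd = ν}

/-- `𝔻(QX, QY ‖ P)` : minimum relative entropy over couplings. -/
def Dmin (QX : Measure X) (QY : Measure Y) (P : Measure (X × Y)) : EReal :=
  ⨅ (π : Measure (X × Y)) (_ : π ∈ couplings QX QY), KL π P

/-! ### The functions φ and their envelopes -/

/-- `φ̲(s,t)`. -/
def phiL (P : Measure (X × Y)) (s t : ℝ) : EReal :=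
  ⨅ (QX : Measure X) (QY : Measure Y) (_ : IsProbabilityMeasure QX)
    (_ : IsProbabilityMeasure QY) (_ : QX ≪ m1 P) (_ : QY ≪ m2 P)
    (_ : KL QX (m1 P) = (s : EReal)) (_ : KL QY (m2 P) = (t : EReal)),
    Dmin QX QY P

/-- `φ̄(s,t)`. -/
def phiU (P : Measure (X × Y)) (s t : ℝ) : EReal :=
  ⨆ (QX : Measure X) (QY : Measure Y) (_ : IsProbabilityMeasure QX)
    (_ : IsProbabilityMeasure QY) (_ : QX ≪ m1 P) (_ : QY ≪ m2 P)
    (_ : KL QX (m1 P) = (s : EReal)) (_ : KL QY (m2 P) = (t : EReal)),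
    Dmin QX QY P

/-- Lower convex envelope on `[0,∞)²`, via convex combinations of (at most) 4 points
(Carathéodory). -/
def lce2 (F : ℝ → ℝ → EReal) (a b : ℝ) : EReal :=
  ⨅ (q : Fin 4 → ℝ) (x : Fin 4 → ℝ × ℝ) (_ : ∀ i, 0 ≤ q i) (_ : ∑ i, q i = 1)
    (_ : ∀ i, 0 ≤ (x i).1 ∧ 0 ≤ (x i).2)
    (_ : ∑ i, q i * (x i).1 = a) (_ : ∑ i, q i * (x i).2 = b),
    ∑ i, (q i : EReal) * F (x i).1 (x i).2

/-- Upper concave envelope on `[0,∞)²`. -/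
def uce2 (F : ℝ → ℝ → EReal) (a b : ℝ) : EReal :=
  ⨆ (q : Fin 4 → ℝ) (x : Fin 4 → ℝ × ℝ) (_ : ∀ i, 0 ≤ q i) (_ : ∑ i, q i = 1)
    (_ : ∀ i, 0 ≤ (x i).1 ∧ 0 ≤ (x i).2)
    (_ : ∑ i, q i * (x i).1 = a) (_ : ∑ i, q i * (x i).2 = b),
    ∑ i, (q i : EReal) * F (x i).1 (x i).2

/-- Lower convex envelope on `[0,∞)`. -/
def lce1 (F : ℝ → EReal) (a : ℝ) : EReal :=
  ⨅ (q : Fin 3 → ℝ) (x : Fin 3 → ℝ) (_ : ∀ i, 0 ≤ q i) (_ : ∑ i, q i = 1)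
    (_ : ∀ i, 0 ≤ x i) (_ : ∑ i, q i * x i = a),
    ∑ i, (q i : EReal) * F (x i)

/-- Upper concave envelope on `[0,∞)`. -/
def uce1 (F : ℝ → EReal) (a : ℝ) : EReal :=
  ⨆ (q : Fin 3 → ℝ) (x : Fin 3 → ℝ) (_ : ∀ i, 0 ≤ q i) (_ : ∑ i, q i = 1)
    (_ : ∀ i, 0 ≤ x i) (_ : ∑ i, q i * x i = a),
    ∑ i, (q i : EReal) * F (x i)

/-- `Θ̲(α,β)`: increasing lower convex envelope of `φ̲`. -/
def ThetaL (P : Measure (X × Y)) (α β : ℝ) : EReal :=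
  ⨅ (s : ℝ) (t : ℝ) (_ : α ≤ s) (_ : β ≤ t), lce2 (phiL P) s t

/-- `Θ̄(α,β)`: increasing upper concave envelope of `φ̄`. -/
def ThetaU (P : Measure (X × Y)) (α β : ℝ) : EReal :=
  ⨆ (s : ℝ) (t : ℝ) (_ : 0 ≤ s) (_ : s ≤ α) (_ : 0 ≤ t) (_ : t ≤ β), uce2 (phiU P) s t

/-- `φ_r(s) = inf_{t ≥ 0} (φ̲(s,t) - t/r)` for `r ∈ [1,∞]` (`r` an extended real). -/
def phiRinf (P : Measure (X × Y)) (r : EReal) (s : ℝ) : EReal :=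
  ⨅ (t : ℝ) (_ : 0 ≤ t), phiL P s t - divE t r

/-- `Θ_r(α)` for `r ∈ [1,∞]`. -/
def ThetaGe1 (P : Measure (X × Y)) (r : EReal) (α : ℝ) : EReal :=
  ⨅ (s : ℝ) (_ : α ≤ s), lce1 (phiRinf P r) s

/-- `φ_r(s) = sup_{t ≥ 0} (φ̄(s,t) - t/r)` for `r ∈ (0,1)`. -/
def phiSupR (P : Measure (X × Y)) (r : ℝ) (s : ℝ) : EReal :=
  ⨆ (t : ℝ) (_ : 0 ≤ t), phiU P s t - divE t (r : EReal)

/-- `φ_r(s)` for `r < 0`. -/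
def phiNeg (P : Measure (X × Y)) (r : ℝ) (s : ℝ) : EReal :=
  ⨆ (QX : Measure X) (_ : IsProbabilityMeasure QX) (_ : QX ≪ m1 P)
    (_ : KL QX (m1 P) = (s : EReal)),
    ⨅ (QY : Measure Y) (_ : IsProbabilityMeasure QY) (_ : QY ≪ m2 P),
      Dmin QX QY P - ediv (KL QY (m2 P)) r

/-- `φ_r(s)` for `r < 1`, `r ≠ 0`. -/
def phiLT1 (P : Measure (X × Y)) (r : ℝ) (s : ℝ) : EReal :=
  if 0 < r then phiSupR P r s else phiNeg P r s

/-- `Θ_r(α)` for `r < 1`, `r ≠ 0`. -/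
def ThetaLT1 (P : Measure (X × Y)) (r : ℝ) (α : ℝ) : EReal :=
  ⨆ (s : ℝ) (_ : 0 ≤ s) (_ : s ≤ α), uce1 (phiLT1 P r) s

/-- `α_max = sup {-log μ(A) : μ(A) > 0}`. -/
def alphaMax (μ : Measure X) : EReal :=
  ⨆ (A : Set X) (_ : MeasurableSet A) (_ : μ A ≠ 0), -elog (μ A)

/-! ### Entropies -/

/-- `Ent_{p,p}(f)`. -/
def entPP (P : Measure X) (f : X → ℝ) (p : ℝ) : EReal :=
  (((∫ x, f x ^ p * Real.log (f x ^ p) ∂P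
      - (∫ x, f x ^ p ∂P) * Real.log (∫ x, f x ^ p ∂P))
     / (∫ x, f x ^ p ∂P) : ℝ) : EReal)

/-- `Ent_{p,p̂}(f)` for a nonzero real `p` and a real `p̂`. -/
def ent (P : Measure X) (f : X → ℝ) (p phat : ℝ) : EReal :=
  if phat = p then entPP P f p
  else if phat = 0 then -elog (P {x | 0 < f x})
  else ((p * phat / (p - phat) : ℝ) : EReal) * (elog (rnorm P f p) - elog (rnorm P f phat))

/-- `Ent_{p,∞}(f)` for a nonzero real `p`. -/
def entTop (P : Measure X) (f : X → ℝ) (p : ℝ) : EReal :=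
  if rnormInf P f = ⊤ then (if 0 < p then ⊤ else ⊥)
  else ((-p : ℝ) : EReal) * (elog (rnorm P f p) - elog (rnormInf P f))

/-- `Ent_{p,p*}(f)` for a nonzero real `p` and `p* ∈ [0,∞]`. -/
def entE (P : Measure X) (f : X → ℝ) (p : ℝ) (ps : ℝ≥0∞) : EReal :=
  if ps = ⊤ then entTop P f p else ent P f p ps.toReal

/-- Admissible functions: measurable, nonnegative, not a.e. zero. -/
def Adm (P : Measure X) (f : X → ℝ) : Prop :=
  Measurable f ∧ (∀ x, 0 ≤ f x) ∧ ¬ f =ᵐ[P] (fun _ => 0)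

/-! ### Products -/

/-- `n`-fold product measure. -/
def piM (n : ℕ) (P : Measure X) : Measure (Fin n → X) := Measure.pi fun _ => P

def fstv {n : ℕ} (z : Fin n → X × Y) : Fin n → X := fun i => (z i).1
def sndv {n : ℕ} (z : Fin n → X × Y) : Fin n → Y := fun i => (z i).2

/-- `⟨f,g⟩ = ∫ f(xⁿ) g(yⁿ) dP^{⊗n}`. -/
def innerFG (P : Measure (X × Y)) (n : ℕ) (f : (Fin n → X) → ℝ) (g : (Fin n → Y) → ℝ) :
    ℝ≥0∞ :=
  ∫⁻ z, ENNReal.ofReal (f (fstv z)) * ENNReal.ofReal (g (sndv z)) ∂(piM n P)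

/-- The set `A × B` viewed inside `(X × Y)ⁿ`. -/
def prodSet {n : ℕ} (A : Set (Fin n → X)) (B : Set (Fin n → Y)) : Set (Fin n → X × Y) :=
  {z | fstv z ∈ A ∧ sndv z ∈ B}

/-! ### Kernels -/

/-- Product of kernel measures `⊗ᵢ κ(yᵢ)`. -/
def kpi {n : ℕ} (κ : Kernel Y X) (y : Fin n → Y) : Measure (Fin n → X) :=
  Measure.pi fun i => κ (y i)

/-- The conditional expectation operator `P_{X|Y}^{⊗n}(f)`. -/
def condOp {n : ℕ} (κ : Kernel Y X) (f : (Fin n → X) → ℝ) : (Fin n → Y) → ℝ≥0∞ :=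
  fun y => ∫⁻ x, ENNReal.ofReal (f x) ∂(kpi κ y)

/-- `κ` is a regular conditional probability of the first coordinate given the second. -/
def IsCondKernel (P : Measure (X × Y)) (κ : Kernel Y X) : Prop :=
  ∀ (A : Set X) (B : Set Y), MeasurableSet A → MeasurableSet B →
    P (A ×ˢ B) = ∫⁻ y in B, κ y A ∂(m2 P)

/-! ### η and `Λ̲*` -/

/-- The function `η_{p,p̂}(α,s)`. -/
def eta (p phat α : ℝ) (s : EReal) : EReal :=
  if 0 ≤ p ∧ 0 ≤ phat then max (ediv ((α : EReal) - s) p) (ediv ((α : EReal) - s) phat)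
  else if 0 < p ∧ phat < 0 then ediv ((α : EReal) - s) p
  else if 0 < phat ∧ p < 0 then ediv ((α : EReal) - s) phat
  else ⊥

/-- `Λ̲*_{p,q,p̂,q̂}(α,β)` (time sharing variable of size ≤ 4). -/
def LamLstar (P : Measure (X × Y)) (p q phat qhat α β : ℝ) : EReal :=
  ⨅ (w : Fin 4 → ℝ) (QX : Fin 4 → Measure X) (QY : Fin 4 → Measure Y)
    (_ : ∀ i, 0 ≤ w i) (_ : ∑ i, w i = 1)
    (_ : ∀ i, IsProbabilityMeasure (QX i)) (_ : ∀ i, QX i ≪ m1 P)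
    (_ : ∀ i, IsProbabilityMeasure (QY i)) (_ : ∀ i, QY i ≪ m2 P),
    (∑ i, (w i : EReal) * Dmin (QX i) (QY i) P)
      + eta p phat α (∑ i, (w i : EReal) * KL (QX i) (m1 P))
      + eta q qhat β (∑ i, (w i : EReal) * KL (QY i) (m2 P))

/-! ### Sub/supergradients (slopes in `[0,∞]`) -/

def IsSubgrad2 (F : ℝ → ℝ → EReal) (α β : ℝ) (u v : ℝ≥0∞) : Prop :=
  ∀ s t : ℝ, 0 ≤ s → 0 ≤ t →
    F α β + (u : EReal) * ((s - α : ℝ) : EReal) + (v : EReal) * ((t - β : ℝ) : EReal) ≤ F s t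

def IsSupergrad2 (F : ℝ → ℝ → EReal) (α β : ℝ) (u v : ℝ≥0∞) : Prop :=
  ∀ s t : ℝ, 0 ≤ s → 0 ≤ t →
    F s t ≤ F α β + (u : EReal) * ((s - α : ℝ) : EReal) + (v : EReal) * ((t - β : ℝ) : EReal)

def IsSubgrad1 (F : ℝ → EReal) (α : ℝ) (u : ℝ≥0∞) : Prop :=
  ∀ s : ℝ, 0 ≤ s → F α + (u : EReal) * ((s - α : ℝ) : EReal) ≤ F s

def IsSupergrad1 (F : ℝ → EReal) (α : ℝ) (u : ℝ≥0∞) : Prop :=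
  ∀ s : ℝ, 0 ≤ s → F s ≤ F α + (u : EReal) * ((s - α : ℝ) : EReal)

/-- Existence of a weakly separating functional in finite dimension, for an arbitrary convex set. -/
theorem aux_sep {E : Type*} [NormedAddCommGroup E] [NormedSpace ℝ E] [FiniteDimensional ℝ E]
    {C : Set E} (hC : Convex ℝ C) (hne : C.Nonempty) (h0 : (0 : E) ∉ C) :
    ∃ l : E →L[ℝ] ℝ, l ≠ 0 ∧ ∀ c ∈ C, 0 ≤ l c := by
  by_cases hs : vectorSpan ℝ C = ⊤
  · have hs' : affineSpan ℝ C = ⊤ :=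
      (AffineSubspace.affineSpan_eq_top_iff_vectorSpan_eq_top_of_nonempty ℝ E E hne).2 hs
    have hint := (hC.interior_nonempty_iff_affineSpan_eq_top).2 hs'
    have h0' : (0 : E) ∉ interior C := fun h => h0 (interior_subset h)
    obtain ⟨f, hf⟩ := geometric_hahn_banach_point_open hC.interior isOpen_interior h0'
    refine ⟨f, ?_, ?_⟩
    · rintro rfl
      obtain ⟨x, hx⟩ := hint
      simpa using hf x hx
    · intro c hc
      have hcl : c ∈ closure (interior C) := by
        rw [hC.closure_interior_eq_closure_of_nonempty_interior hint]
        exact subset_closure hc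
      have hsub : closure (interior C) ⊆ {x | 0 ≤ f x} := by
        apply closure_minimal
        · intro x hx
          have := hf x hx
          simp at this
          exact this.le
        · exact isClosed_le continuous_const f.continuous
      exact hsub hcl
  · obtain ⟨f, hf, hle⟩ := Submodule.exists_le_ker_of_lt_top _ (lt_top_iff_ne_top.2 hs)
    obtain ⟨c0, hc0⟩ := hne
    have hconst : ∀ c ∈ C, f c = f c0 := by
      intro c hc
      have : c -ᵥ c0 ∈ vectorSpan ℝ C := vsub_mem_vectorSpan ℝ hc hc0
      have := hle this
      rw [LinearMap.mem_ker, vsub_eq_sub, map_sub] at this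
      linarith
    have hfn : LinearMap.toContinuousLinearMap f ≠ 0 := by
      intro h
      apply hf
      ext x
      have := congrArg (fun g : E →L[ℝ] ℝ => g x) h
      simpa using this
    rcases le_total 0 (f c0) with h | h
    · refine ⟨LinearMap.toContinuousLinearMap f, hfn, fun c hc => ?_⟩
      simpa [hconst c hc] using h
    · refine ⟨-LinearMap.toContinuousLinearMap f, by simpa using hfn, fun c hc => ?_⟩
      simpa [hconst c hc] using h

/-- The mean of an integrable random vector in a (not necessarily closed) convex set of a
finite-dimensional space belongs to the set. -/
theorem aux_mean {Ω : Type*} [MeasurableSpace Ω] (μ : Measure Ω) [IsProbabilityMeasure μ]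
    (d : ℕ) : ∀ {E : Type} [NormedAddCommGroup E] [NormedSpace ℝ E] [FiniteDimensional ℝ E]
    (_ : Module.finrank ℝ E ≤ d)
    {C : Set E} (_ : Convex ℝ C) (f : Ω → E) (_ : Integrable f μ) (_ : ∀ᵐ ω ∂μ, f ω ∈ C),
    ∫ ω, f ω ∂μ ∈ C := by
  induction d with
  | zero =>
    intro E _ _ _ hd C hC f hf hfC
    have hsub : Subsingleton E := by
      rw [← Module.finrank_zero_iff (R := ℝ)]; omega
    obtain ⟨ω, hω⟩ := hfC.exists
    rwa [Subsingleton.elim (∫ ω, f ω ∂μ) (f ω)]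
  | succ d ih =>
    intro E _ _ _ hd C hC f hf hfC
    by_contra hm
    set m := ∫ ω, f ω ∂μ with hmdef
    let C' : Set E := (fun x => x + m) ⁻¹' C
    have hC' : Convex ℝ C' := hC.translate_preimage_left m
    have h0 : (0 : E) ∉ C' := by simpa [C'] using hm
    let g : Ω → E := fun ω => f ω - m
    have hg : Integrable g μ := hf.sub (integrable_const m)
    have hgC : ∀ᵐ ω ∂μ, g ω ∈ C' := by
      filter_upwards [hfC] with ω hω
      simpa [C', g] using hω
    have hg0 : ∫ ω, g ω ∂μ = 0 := by
      simp only [g]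
      rw [integral_sub hf (integrable_const m)]
      simp [← hmdef]
    have hne : C'.Nonempty := by
      obtain ⟨ω, hω⟩ := hgC.exists
      exact ⟨_, hω⟩
    obtain ⟨l, hl, hlC⟩ := aux_sep hC' hne h0
    have hint : ∫ ω, l (g ω) ∂μ = 0 := by
      rw [l.integral_comp_comm hg, hg0, map_zero]
    have hae : ∀ᵐ ω ∂μ, l (g ω) = 0 := by
      have := (integral_eq_zero_iff_of_nonneg_ae
        (by filter_upwards [hgC] with ω hω using hlC _ hω) (l.integrable_comp hg)).1 hint
      exact this
    let K : Submodule ℝ E := LinearMap.ker (l : E →ₗ[ℝ] ℝ)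
    have hKlt : K < ⊤ := by
      rw [lt_top_iff_ne_top]
      intro h
      apply hl
      ext x
      have : x ∈ K := h ▸ Submodule.mem_top
      simpa [K] using this
    have hKd : Module.finrank ℝ K ≤ d := by
      have := Submodule.finrank_lt hKlt.ne
      omega
    obtain ⟨p, hp⟩ := K.subtype.exists_leftInverse_of_injective (by simp)
    let pc : E →L[ℝ] K := LinearMap.toContinuousLinearMap p
    have hpK : ∀ x : E, x ∈ K → ((pc x : K) : E) = x := by
      intro x hx
      have := LinearMap.congr_fun hp ⟨x, hx⟩
      simp at this
      simp [pc, this]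
    have hconv : Convex ℝ ((K.subtype) ⁻¹' C') := hC'.linear_preimage K.subtype
    have key := ih hKd hconv (fun ω => pc (g ω)) (pc.integrable_comp hg) (by
      filter_upwards [hae, hgC] with ω h1 h2
      have : ((pc (g ω) : K) : E) = g ω := hpK _ (by simpa [K] using h1)
      simpa [this] using h2)
    rw [pc.integral_comp_comm hg, hg0, map_zero] at key
    exact h0 (by simpa using key)

theorem aux_mean3 {Ω : Type*} [MeasurableSpace Ω] (μ : Measure Ω) [IsProbabilityMeasure μ]
    {C : Set (ℝ × ℝ × ℝ)} (hC : Convex ℝ C) (f g h : Ω → ℝ) (hf : Integrable f μ)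
    (hg : Integrable g μ) (hh : Integrable h μ) (hmem : ∀ᵐ ω ∂μ, (f ω, g ω, h ω) ∈ C) :
    (∫ ω, f ω ∂μ, ∫ ω, g ω ∂μ, ∫ ω, h ω ∂μ) ∈ C := by
  have := aux_mean μ _ le_rfl hC (fun ω => (f ω, g ω, h ω)) (hf.prodMk (hg.prodMk hh)) hmem
  rwa [integral_pair hf (hg.prodMk hh), integral_pair hg hh] at this

/-- Carathéodory in `ℝ³`, with exactly four points. -/
theorem aux_carath {S : Set (ℝ × ℝ × ℝ)} {z : ℝ × ℝ × ℝ} (hz : z ∈ convexHull ℝ S) :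
    ∃ (q : Fin 4 → ℝ) (y : Fin 4 → ℝ × ℝ × ℝ), (∀ i, 0 ≤ q i) ∧ ∑ i, q i = 1 ∧
      (∀ i, y i ∈ S) ∧ ∑ i, q i * (y i).1 = z.1 ∧ ∑ i, q i * (y i).2.1 = z.2.1 ∧
      ∑ i, q i * (y i).2.2 = z.2.2 := by
  obtain ⟨ι, _, w, q, hw, hind, hq, hq1, hsum⟩ := eq_pos_convex_span_of_mem_convexHull hz
  have hcard : Fintype.card ι ≤ 4 := by
    have := hind.card_le_finrank_succ
    have h2 := Submodule.finrank_le (vectorSpan ℝ (Set.range w))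
    simp at h2
    omega
  obtain ⟨e⟩ : Nonempty (ι ↪ Fin 4) :=
    Function.Embedding.nonempty_of_card_le (by simpa using hcard)
  have hne : Nonempty ι := by
    by_contra h
    rw [not_nonempty_iff] at h
    simp at hq1
  obtain ⟨i0⟩ := hne
  have hsum0 : ∀ F : ι → ℝ, ∑ i, Function.extend e F 0 i = ∑ i, F i := by
    intro F
    have h1 : ∑ i ∈ Finset.univ.map e, Function.extend e F 0 i = ∑ i, Function.extend e F 0 i := by
      apply Finset.sum_subset (Finset.subset_univ _)
      intro i _ hi
      rw [Function.extend_apply']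
      · rfl
      · rintro ⟨a, rfl⟩
        exact hi (by simp)
    rw [← h1, Finset.sum_map]
    exact Finset.sum_congr rfl fun i _ => by rw [e.injective.extend_apply]
  have hex : ∀ (G : ℝ × ℝ × ℝ → ℝ) (i : Fin 4), Function.extend e q 0 i *
      G (Function.extend e w (fun _ => w i0) i) = Function.extend e (fun j => q j * G (w j)) 0 i := by
    intro G i
    by_cases h : ∃ a, e a = i
    · obtain ⟨a, rfl⟩ := h
      simp [e.injective.extend_apply]
    · simp [Function.extend_apply' _ _ _ h]
  refine ⟨Function.extend e q 0, Function.extend e w (fun _ => w i0), ?_, ?_, ?_, ?_, ?_, ?_⟩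
  · intro i
    by_cases h : ∃ a, e a = i
    · obtain ⟨a, rfl⟩ := h
      simp [e.injective.extend_apply, (hq a).le]
    · simp [Function.extend_apply' _ _ _ h]
  · rw [hsum0, hq1]
  · intro i
    by_cases h : ∃ a, e a = i
    · obtain ⟨a, rfl⟩ := h
      simpa [e.injective.extend_apply] using hw ⟨a, rfl⟩
    · simpa [Function.extend_apply' _ _ _ h] using hw ⟨i0, rfl⟩
  · rw [Finset.sum_congr rfl fun i _ => hex (fun y => y.1) i, hsum0, ← hsum]
    simp [Prod.fst_sum]
  · rw [Finset.sum_congr rfl fun i _ => hex (fun y => y.2.1) i, hsum0, ← hsum]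
    simp [Prod.fst_sum, Prod.snd_sum]
  · rw [Finset.sum_congr rfl fun i _ => hex (fun y => y.2.2) i, hsum0, ← hsum]
    simp [Prod.snd_sum]

theorem aux_rn_pos {Z : Type*} [MeasurableSpace Z] {Q P : Measure Z} [IsProbabilityMeasure Q]
    [IsProbabilityMeasure P] (h : Q ≪ P) : ∀ᵐ x ∂Q, 0 < (Q.rnDeriv P x).toReal := by
  filter_upwards [Measure.rnDeriv_pos h, h.ae_le (Measure.rnDeriv_ne_top Q P)] with x h0 htop
  exact ENNReal.toReal_pos h0.ne' htop

theorem aux_KL_eq {Z : Type*} [MeasurableSpace Z] {Q P : Measure Z} (h : Q ≪ P)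
    (hi : Integrable (fun x => Real.log (Q.rnDeriv P x).toReal) Q) :
    KL Q P = ((∫ x, Real.log (Q.rnDeriv P x).toReal ∂Q : ℝ) : EReal) := by
  unfold KL
  rw [if_pos ⟨h, hi⟩]

/-- Donsker-Varadhan inequality (easy direction). -/
theorem aux_DV {Z : Type*} [MeasurableSpace Z] (Q P : Measure Z) [IsProbabilityMeasure Q]
    [IsProbabilityMeasure P] (h : Q ≪ P)
    (hi : Integrable (fun x => Real.log (Q.rnDeriv P x).toReal) Q) (u : Z → ℝ)
    (hu : Measurable u) (hu0 : ∀ x, 0 ≤ u x) (hui : Integrable u P)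
    (hpos : ∀ᵐ x ∂Q, 0 < u x) (hlog : Integrable (fun x => Real.log (u x)) Q) :
    ∫ x, Real.log (u x) ∂Q - ∫ x, Real.log (Q.rnDeriv P x).toReal ∂Q ≤ Real.log (∫ x, u x ∂P) := by
  set r : Z → ℝ := fun x => (Q.rnDeriv P x).toReal with hr
  have hrpos : ∀ᵐ x ∂Q, 0 < r x := aux_rn_pos h
  have hr0 : ∀ x, 0 ≤ r x := fun x => ENNReal.toReal_nonneg
  have hrm : Measurable r := (Measure.measurable_rnDeriv Q P).ennreal_toReal
  set I := ∫ x, u x ∂P with hI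
  have hI0 : 0 ≤ I := integral_nonneg hu0
  have hIpos : 0 < I := by
    rcases hI0.lt_or_eq with h' | h'
    · exact h'
    · exfalso
      have h1 := (integral_eq_zero_iff_of_nonneg hu0 hui).1 h'.symm
      have h2 : u =ᵐ[Q] 0 := h.ae_le h1
      obtain ⟨x, hx1, hx2⟩ := (hpos.and h2).exists
      rw [hx2] at hx1
      simp at hx1
  have hbd : ∀ x, r x • (u x / r x) ≤ u x := by
    intro x
    by_cases hx : r x = 0
    · simp [hx, hu0 x]
    · rw [smul_eq_mul, mul_div_cancel₀ _ hx]
  have hbd0 : ∀ x, 0 ≤ r x • (u x / r x) := fun x =>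
    mul_nonneg (hr0 x) (div_nonneg (hu0 x) (hr0 x))
  have hiP : Integrable (fun x => r x • (u x / r x)) P := by
    refine hui.mono' ((hrm.smul (hu.div hrm)).aestronglyMeasurable) (ae_of_all _ fun x => ?_)
    rw [Real.norm_eq_abs, abs_of_nonneg (hbd0 x)]
    exact hbd x
  have hiQ : Integrable (fun x => u x / r x) Q := (integrable_rnDeriv_smul_iff h).1 hiP
  have hle : ∫ x, u x / r x ∂Q ≤ I := by
    rw [← integral_rnDeriv_smul h]
    exact integral_mono hiP hui hbd
  have hmain : ∫ x, (Real.log (u x) - Real.log (r x)) ∂Q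
      ≤ ∫ x, (u x / r x * I⁻¹ + (Real.log I - 1)) ∂Q := by
    refine integral_mono_ae (hlog.sub hi) ((hiQ.mul_const _).add (integrable_const _)) ?_
    filter_upwards [hpos, hrpos] with x hx1 hx2
    have hq : 0 < u x / r x * I⁻¹ := by positivity
    have := Real.log_le_sub_one_of_pos hq
    rw [Real.log_mul (by positivity) (by positivity), Real.log_div hx1.ne' hx2.ne',
      Real.log_inv] at this
    linarith
  rw [integral_sub hlog hi, integral_add (hiQ.mul_const _) (integrable_const _),
    integral_mul_const] at hmain
  simp only [integral_const, probReal_univ, one_smul] at hmain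
  have : (∫ x, u x / r x ∂Q) * I⁻¹ ≤ 1 := by
    rw [← div_eq_mul_inv, div_le_one hIpos]
    exact hle
  linarith

theorem aux_KL_nonneg {Z : Type*} [MeasurableSpace Z] (Q P : Measure Z) [IsProbabilityMeasure Q]
    [IsProbabilityMeasure P] : 0 ≤ KL Q P := by
  unfold KL
  split_ifs with h
  · have := aux_DV Q P h.1 h.2 (fun _ => 1) measurable_const (fun _ => zero_le_one)
      (integrable_const _) (by simp) (by simp)
    simp at this
    exact_mod_cast this
  · exact le_top

/-- A measure with bounded density has finite divergence. -/
theorem aux_bdd {Z : Type*} [MeasurableSpace Z] (Q P : Measure Z) [IsProbabilityMeasure Q]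
    [IsProbabilityMeasure P] (C : ℝ) (hC : 0 ≤ C)
    (h : ∀ S, MeasurableSet S → Q S ≤ ENNReal.ofReal C * P S) :
    Q ≪ P ∧ Integrable (fun x => Real.log (Q.rnDeriv P x).toReal) Q := by
  have hac : Q ≪ P := by
    refine Measure.AbsolutelyContinuous.mk fun s hs h0 => ?_
    have := h s hs
    rw [h0, mul_zero] at this
    exact le_antisymm this zero_le
  refine ⟨hac, ?_⟩
  have hle : Q.rnDeriv P ≤ᵐ[P] fun _ => ENNReal.ofReal C := by
    refine ae_le_of_forall_setLIntegral_le_of_sigmaFinite (Measure.measurable_rnDeriv Q P)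
      fun s hs _ => ?_
    rw [setLIntegral_const]
    exact (Measure.setLIntegral_rnDeriv_le s).trans (h s hs)
  rw [← integrable_rnDeriv_smul_iff hac]
  obtain ⟨M, hM⟩ := (isCompact_Icc (a := (0:ℝ)) (b := C)).exists_bound_of_continuousOn
    (f := fun t => t * Real.log t) Real.continuous_mul_log.continuousOn
  have hrm : Measurable (fun x => (Q.rnDeriv P x).toReal) :=
    (Measure.measurable_rnDeriv Q P).ennreal_toReal
  refine Integrable.of_bound (C := M)
    ((hrm.smul (Real.measurable_log.comp hrm)).aestronglyMeasurable) ?_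
  filter_upwards [hle] with x hx
  apply hM
  exact ⟨ENNReal.toReal_nonneg, ENNReal.toReal_le_of_le_ofReal hC hx⟩

/-- Tilting a probability measure by a `[0,1]`-valued density. -/
theorem aux_tilt {Z : Type*} [MeasurableSpace Z] (P : Measure Z)
    [IsProbabilityMeasure P] (u : Z → ℝ) (hu : Measurable u) (hu0 : ∀ x, 0 ≤ u x)
    (hu1 : ∀ x, u x ≤ 1) (hI : 0 < ∫ x, u x ∂P) :
    ∃ Q : Measure Z, IsProbabilityMeasure Q ∧ Q ≪ P ∧ (∀ᵐ x ∂Q, 0 < u x) ∧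
      Integrable (fun x => Real.log (u x)) Q ∧
      KL Q P = ((∫ x, Real.log (u x) ∂Q - Real.log (∫ x, u x ∂P) : ℝ) : EReal) ∧
      ∃ C : ℝ, 0 ≤ C ∧ ∀ S, MeasurableSet S → Q S ≤ ENNReal.ofReal C * P S := by
  set I := ∫ x, u x ∂P with hIdef
  have hui : Integrable u P := Integrable.of_bound (C := 1) hu.aestronglyMeasurable
    (ae_of_all _ fun x => by rw [Real.norm_eq_abs, abs_of_nonneg (hu0 x)]; exact hu1 x)
  let f : Z → ℝ≥0∞ := fun x => ENNReal.ofReal (u x / I)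
  have hf : Measurable f := (hu.div_const I).ennreal_ofReal
  let Q := P.withDensity f
  have hQ : IsProbabilityMeasure Q := by
    constructor
    rw [withDensity_apply _ MeasurableSet.univ, Measure.restrict_univ]
    rw [← ofReal_integral_eq_lintegral_ofReal (hui.div_const I)
      (ae_of_all _ fun x => div_nonneg (hu0 x) hI.le), integral_div, div_self hI.ne']
    simp
  have hac : Q ≪ P := withDensity_absolutelyContinuous P f
  have hbound : ∀ S, MeasurableSet S → Q S ≤ ENNReal.ofReal I⁻¹ * P S := by
    intro S hS
    rw [withDensity_apply _ hS, ← setLIntegral_const]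
    refine lintegral_mono fun x => ENNReal.ofReal_le_ofReal ?_
    rw [div_eq_mul_inv]
    exact mul_le_of_le_one_left (inv_nonneg.2 hI.le) (hu1 x)
  obtain ⟨-, hint⟩ := aux_bdd Q P I⁻¹ (inv_nonneg.2 hI.le) hbound
  have hrn : ∀ᵐ x ∂Q, Q.rnDeriv P x = f x := hac.ae_le (Measure.rnDeriv_withDensity P hf)
  have hpos : ∀ᵐ x ∂Q, 0 < u x := by
    filter_upwards [hrn, aux_rn_pos hac] with x h1 h2
    rw [h1] at h2
    by_contra hx
    have : u x = 0 := le_antisymm (not_lt.1 hx) (hu0 x)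
    simp [f, this] at h2
  have hlogeq : ∀ᵐ x ∂Q, Real.log (Q.rnDeriv P x).toReal = Real.log (u x) - Real.log I := by
    filter_upwards [hrn, hpos] with x h1 h2
    rw [h1, ENNReal.toReal_ofReal (div_nonneg (hu0 x) hI.le), Real.log_div h2.ne' hI.ne']
  have hlogi : Integrable (fun x => Real.log (u x)) Q := by
    have h2 : Integrable (fun x => Real.log (Q.rnDeriv P x).toReal + Real.log I) Q :=
      hint.add (integrable_const _)
    refine h2.congr ?_
    filter_upwards [hlogeq] with x hx
    rw [hx]; ring
  refine ⟨Q, hQ, hac, hpos, hlogi, ?_, I⁻¹, inv_nonneg.2 hI.le, hbound⟩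
  rw [aux_KL_eq hac hint, integral_congr_ae hlogeq, integral_sub hlogi (integrable_const _)]
  simp

/-- Section of a subset of a power. -/
def secS {Z : Type*} {n : ℕ} (A : Set (Fin (n + 1) → Z)) (x : Z) : Set (Fin n → Z) :=
  {z | (Fin.cons x z : Fin (n + 1) → Z) ∈ A}

theorem aux_cons_meas {Z : Type*} [MeasurableSpace Z] (n : ℕ) :
    Measurable (fun p : Z × (Fin n → Z) => (Fin.cons p.1 p.2 : Fin (n + 1) → Z)) := by
  rw [measurable_pi_iff]
  intro i
  refine Fin.cases ?_ (fun j => ?_) i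
  · simpa using measurable_fst
  · simp only [Fin.cons_succ]
    fun_prop

theorem secS_meas {Z : Type*} [MeasurableSpace Z] {n : ℕ} {A : Set (Fin (n + 1) → Z)}
    (hA : MeasurableSet A) (x : Z) : MeasurableSet (secS A x) :=
  ((aux_cons_meas n).comp measurable_prodMk_left) hA

instance piM_prob {Z : Type*} [MeasurableSpace Z] (n : ℕ) (P : Measure Z)
    [IsProbabilityMeasure P] : IsProbabilityMeasure (piM n P) := by
  unfold piM; infer_instance

theorem secS_fun_meas {Z : Type*} [MeasurableSpace Z] {n : ℕ} (P : Measure Z)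
    [IsProbabilityMeasure P] {A : Set (Fin (n + 1) → Z)} (hA : MeasurableSet A) :
    Measurable fun x => (piM n P).real (secS A x) :=
  (measurable_measure_prodMk_left (ν := piM n P) (aux_cons_meas n hA)).ennreal_toReal

theorem piM_succ {Z : Type*} [MeasurableSpace Z] {n : ℕ} (P : Measure Z)
    [IsProbabilityMeasure P] {A : Set (Fin (n + 1) → Z)} (hA : MeasurableSet A) :
    ∫ x, (piM n P).real (secS A x) ∂P = (piM (n + 1) P).real A := by
  have hmp := (measurePreserving_piFinSuccAbove (fun _ : Fin (n + 1) => P) 0).symm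
  have h1 : piM (n + 1) P A = ∫⁻ x, piM n P (secS A x) ∂P := by
    have h2 := hmp.measure_preimage hA.nullMeasurableSet
    unfold piM
    rw [← h2, Measure.prod_apply (hmp.measurable hA)]
    refine lintegral_congr fun x => ?_
    congr 1
    ext z
    simp [secS, MeasurableEquiv.piFinSuccAbove, Fin.insertNthEquiv]
  rw [measureReal_def, h1, ← integral_toReal]
  · rfl
  · exact (measurable_measure_prodMk_left (ν := piM n P) (aux_cons_meas n hA)).aemeasurable
  · exact ae_of_all _ fun x => measure_lt_top _ _

instance m1_prob (P : Measure (X × Y)) [IsProbabilityMeasure P] : IsProbabilityMeasure (m1 P) :=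
  Measure.isProbabilityMeasure_map measurable_fst.aemeasurable

instance m2_prob (P : Measure (X × Y)) [IsProbabilityMeasure P] : IsProbabilityMeasure (m2 P) :=
  Measure.isProbabilityMeasure_map measurable_snd.aemeasurable

theorem fstv_meas {n : ℕ} : Measurable (fstv : (Fin n → X × Y) → _) :=
  measurable_pi_iff.2 fun i => measurable_fst.comp (measurable_pi_apply i)

theorem sndv_meas {n : ℕ} : Measurable (sndv : (Fin n → X × Y) → _) :=
  measurable_pi_iff.2 fun i => measurable_snd.comp (measurable_pi_apply i)

theorem piM_m1 (n : ℕ) (P : Measure (X × Y)) [IsProbabilityMeasure P] {A : Set (Fin n → X)}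
    (hA : MeasurableSet A) : piM n (m1 P) A = piM n P (fstv ⁻¹' A) := by
  have : ∀ i : Fin n, SigmaFinite (Measure.map (Prod.fst : X × Y → X) P) := fun _ =>
    inferInstanceAs (SigmaFinite (m1 P))
  have h := Measure.pi_map_pi (μ := fun _ : Fin n => P) (f := fun _ => (Prod.fst : X × Y → X))
    (fun _ => measurable_fst.aemeasurable)
  unfold piM m1
  rw [← h]
  exact Measure.map_apply fstv_meas hA

theorem piM_m2 (n : ℕ) (P : Measure (X × Y)) [IsProbabilityMeasure P] {A : Set (Fin n → Y)}
    (hA : MeasurableSet A) : piM n (m2 P) A = piM n P (sndv ⁻¹' A) := by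
  have : ∀ i : Fin n, SigmaFinite (Measure.map (Prod.snd : X × Y → Y) P) := fun _ =>
    inferInstanceAs (SigmaFinite (m2 P))
  have h := Measure.pi_map_pi (μ := fun _ : Fin n => P) (f := fun _ => (Prod.snd : X × Y → Y))
    (fun _ => measurable_snd.aemeasurable)
  unfold piM m2
  rw [← h]
  exact Measure.map_apply sndv_meas hA

theorem prodSet_meas {n : ℕ} {A : Set (Fin n → X)} {B : Set (Fin n → Y)}
    (hA : MeasurableSet A) (hB : MeasurableSet B) : MeasurableSet (prodSet A B) :=
  (fstv_meas hA).inter (sndv_meas hB)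

theorem secS_prodSet {n : ℕ} (A : Set (Fin (n + 1) → X)) (B : Set (Fin (n + 1) → Y)) (p : X × Y) :
    secS (prodSet A B) p = prodSet (secS A p.1) (secS B p.2) := by
  have h1 : ∀ z : Fin n → X × Y, fstv (Fin.cons p z : Fin (n + 1) → X × Y) =
      Fin.cons p.1 (fstv z) := by
    intro z; ext i; refine Fin.cases ?_ (fun j => ?_) i <;> simp [fstv]
  have h2 : ∀ z : Fin n → X × Y, sndv (Fin.cons p z : Fin (n + 1) → X × Y) =
      Fin.cons p.2 (sndv z) := by
    intro z; ext i; refine Fin.cases ?_ (fun j => ?_) i <;> simp [sndv]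
  ext z
  simp only [secS, prodSet, Set.mem_ofPred_eq, h1, h2]

theorem prodSet_le1 {n : ℕ} (P : Measure (X × Y)) [IsProbabilityMeasure P] {A : Set (Fin n → X)}
    (hA : MeasurableSet A) (B : Set (Fin n → Y)) :
    (piM n P).real (prodSet A B) ≤ (piM n (m1 P)).real A := by
  rw [measureReal_def (piM n (m1 P)), piM_m1 n P hA]
  exact measureReal_mono fun z hz => hz.1

theorem prodSet_le2 {n : ℕ} (P : Measure (X × Y)) [IsProbabilityMeasure P] (A : Set (Fin n → X))
    {B : Set (Fin n → Y)} (hB : MeasurableSet B) :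
    (piM n P).real (prodSet A B) ≤ (piM n (m2 P)).real B := by
  rw [measureReal_def (piM n (m2 P)), piM_m2 n P hB]
  exact measureReal_mono fun z hz => hz.2

theorem aux_sec_log_int {Z : Type*} [MeasurableSpace Z] (Q : Measure Z) [IsProbabilityMeasure Q]
    (w : Z → ℝ) (hw : Measurable w) (hw0 : ∀ x, 0 ≤ w x) (hw1 : ∀ x, w x ≤ 1) (ε : ℝ)
    (hε : 0 < ε) : Integrable (fun x => Real.log (w x + ε)) Q := by
  refine Integrable.of_bound (C := |Real.log ε| + |Real.log (1 + ε)|)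
    (Real.measurable_log.comp (hw.add_const ε)).aestronglyMeasurable (ae_of_all _ fun x => ?_)
  have h1 : Real.log ε ≤ Real.log (w x + ε) := Real.log_le_log hε (by linarith [hw0 x])
  have h2 : Real.log (w x + ε) ≤ Real.log (1 + ε) :=
    Real.log_le_log (by linarith [hw0 x]) (by linarith [hw1 x])
  rw [Real.norm_eq_abs, abs_le]
  constructor
  · linarith [neg_abs_le (Real.log ε), abs_nonneg (Real.log (1 + ε))]
  · linarith [le_abs_self (Real.log (1 + ε)), abs_nonneg (Real.log ε)]

/-- Epigraph of `phiL`. -/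
def KSet (P : Measure (X × Y)) : Set (ℝ × ℝ × ℝ) :=
  {z | 0 ≤ z.1 ∧ 0 ≤ z.2.1 ∧ phiL P z.1 z.2.1 ≤ (z.2.2 : EReal)}

/-- Hypograph of `phiU`. -/
def HSet (P : Measure (X × Y)) : Set (ℝ × ℝ × ℝ) :=
  {z | 0 ≤ z.1 ∧ 0 ≤ z.2.1 ∧ (z.2.2 : EReal) ≤ phiU P z.1 z.2.1}

/-- Dilated monotone hull of the epigraph. -/
def KC (P : Measure (X × Y)) (n : ℕ) : Set (ℝ × ℝ × ℝ) :=
  {z | ∃ h ∈ convexHull ℝ (KSet P), z.1 ≤ n * h.1 ∧ z.2.1 ≤ n * h.2.1 ∧ n * h.2.2 ≤ z.2.2}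

/-- Dilated hull of the hypograph. -/
def HC (P : Measure (X × Y)) (n : ℕ) : Set (ℝ × ℝ × ℝ) :=
  {z | ∃ h ∈ convexHull ℝ (HSet P), z.1 = n * h.1 ∧ z.2.1 = n * h.2.1 ∧ z.2.2 ≤ n * h.2.2}

theorem KC_convex (P : Measure (X × Y)) (n : ℕ) : Convex ℝ (KC P n) := by
  rintro z ⟨h, hh, h1, h2, h3⟩ z' ⟨h', hh', h1', h2', h3'⟩ a b ha hb hab
  refine ⟨a • h + b • h', convex_convexHull ℝ _ hh hh' ha hb hab, ?_, ?_, ?_⟩ <;>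
    simp only [Prod.fst_add, Prod.snd_add, Prod.smul_fst, Prod.smul_snd, smul_eq_mul]
  · nlinarith [mul_le_mul_of_nonneg_left h1 ha, mul_le_mul_of_nonneg_left h1' hb]
  · nlinarith [mul_le_mul_of_nonneg_left h2 ha, mul_le_mul_of_nonneg_left h2' hb]
  · nlinarith [mul_le_mul_of_nonneg_left h3 ha, mul_le_mul_of_nonneg_left h3' hb]

theorem HC_convex (P : Measure (X × Y)) (n : ℕ) : Convex ℝ (HC P n) := by
  rintro z ⟨h, hh, h1, h2, h3⟩ z' ⟨h', hh', h1', h2', h3'⟩ a b ha hb hab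
  refine ⟨a • h + b • h', convex_convexHull ℝ _ hh hh' ha hb hab, ?_, ?_, ?_⟩ <;>
    simp only [Prod.fst_add, Prod.snd_add, Prod.smul_fst, Prod.smul_snd, smul_eq_mul]
  · rw [h1, h1']; ring
  · rw [h2, h2']; ring
  · nlinarith [mul_le_mul_of_nonneg_left h3 ha, mul_le_mul_of_nonneg_left h3' hb]

theorem aux_hull_add {S : Set (ℝ × ℝ × ℝ)} {k h : ℝ × ℝ × ℝ} (hk : k ∈ S)
    (hh : h ∈ convexHull ℝ S) (n : ℕ) :
    ∃ g ∈ convexHull ℝ S, ((n + 1 : ℕ) : ℝ) * g.1 = k.1 + n * h.1 ∧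
      ((n + 1 : ℕ) : ℝ) * g.2.1 = k.2.1 + n * h.2.1 ∧
      ((n + 1 : ℕ) : ℝ) * g.2.2 = k.2.2 + n * h.2.2 := by
  have hn : (0 : ℝ) < (n : ℝ) + 1 := by positivity
  refine ⟨(1 / ((n : ℝ) + 1)) • k + ((n : ℝ) / ((n : ℝ) + 1)) • h,
    convex_convexHull ℝ _ (subset_convexHull ℝ _ hk) hh (by positivity) (by positivity)
      (by field_simp; ring), ?_, ?_, ?_⟩ <;>
  · simp only [Prod.fst_add, Prod.snd_add, Prod.smul_fst, Prod.smul_snd, smul_eq_mul]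
    push_cast
    field_simp

theorem KC_add (P : Measure (X × Y)) (n : ℕ) {k z y : ℝ × ℝ × ℝ} (hk : k ∈ KSet P)
    (hz : z ∈ KC P n) (h1 : y.1 ≤ k.1 + z.1) (h2 : y.2.1 ≤ k.2.1 + z.2.1)
    (h3 : k.2.2 + z.2.2 ≤ y.2.2) : y ∈ KC P (n + 1) := by
  obtain ⟨h, hh, a1, a2, a3⟩ := hz
  obtain ⟨g, hg, b1, b2, b3⟩ := aux_hull_add hk hh n
  exact ⟨g, hg, by linarith, by linarith, by linarith⟩

theorem HC_add (P : Measure (X × Y)) (n : ℕ) {k z y : ℝ × ℝ × ℝ} (hk : k ∈ HSet P)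
    (hz : z ∈ HC P n) (h1 : y.1 = k.1 + z.1) (h2 : y.2.1 = k.2.1 + z.2.1)
    (h3 : y.2.2 ≤ k.2.2 + z.2.2) : y ∈ HC P (n + 1) := by
  obtain ⟨h, hh, a1, a2, a3⟩ := hz
  obtain ⟨g, hg, b1, b2, b3⟩ := aux_hull_add hk hh n
  exact ⟨g, hg, by linarith, by linarith, by linarith⟩

theorem KSet_mem (P Q : Measure (X × Y)) [IsProbabilityMeasure P] [IsProbabilityMeasure Q]
    (s t d : ℝ) (hX : m1 Q ≪ m1 P) (hY : m2 Q ≪ m2 P) (hs : KL (m1 Q) (m1 P) = (s : EReal))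
    (ht : KL (m2 Q) (m2 P) = (t : EReal)) (hd : KL Q P ≤ (d : EReal)) : (s, t, d) ∈ KSet P := by
  refine ⟨?_, ?_, ?_⟩
  · have := aux_KL_nonneg (m1 Q) (m1 P)
    rw [hs] at this
    exact_mod_cast this
  · have := aux_KL_nonneg (m2 Q) (m2 P)
    rw [ht] at this
    exact_mod_cast this
  · refine le_trans ?_ hd
    unfold phiL Dmin
    refine iInf_le_of_le (m1 Q) <| iInf_le_of_le (m2 Q) <| iInf_le_of_le inferInstance <|
      iInf_le_of_le inferInstance <| iInf_le_of_le hX <| iInf_le_of_le hY <|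
      iInf_le_of_le hs <| iInf_le_of_le ht <| iInf_le_of_le Q <| iInf_le_of_le ?_ le_rfl
    exact ⟨inferInstance, rfl, rfl⟩

theorem HSet_mem (P : Measure (X × Y)) [IsProbabilityMeasure P] (QX : Measure X) (QY : Measure Y)
    [IsProbabilityMeasure QX] [IsProbabilityMeasure QY]
    (s t d : ℝ) (hX : QX ≪ m1 P) (hY : QY ≪ m2 P) (hs : KL QX (m1 P) = (s : EReal))
    (ht : KL QY (m2 P) = (t : EReal)) (hd : (d : EReal) ≤ Dmin QX QY P) : (s, t, d) ∈ HSet P := by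
  refine ⟨?_, ?_, ?_⟩
  · have := aux_KL_nonneg QX (m1 P)
    rw [hs] at this
    exact_mod_cast this
  · have := aux_KL_nonneg QY (m2 P)
    rw [ht] at this
    exact_mod_cast this
  · refine le_trans hd ?_
    unfold phiU
    exact le_iSup_of_le QX <| le_iSup_of_le QY <| le_iSup_of_le inferInstance <|
      le_iSup_of_le inferInstance <| le_iSup_of_le hX <| le_iSup_of_le hY <|
      le_iSup_of_le hs <| le_iSup_of_le ht le_rfl

theorem aux_KL_self {Z : Type*} [MeasurableSpace Z] (P : Measure Z) [IsProbabilityMeasure P] :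
    KL P P = ((0 : ℝ) : EReal) := by
  have h : (fun x => Real.log (P.rnDeriv P x).toReal) =ᵐ[P] fun _ => (0 : ℝ) := by
    filter_upwards [Measure.rnDeriv_self P] with x hx
    simp [hx]
  rw [aux_KL_eq Measure.AbsolutelyContinuous.rfl ((integrable_const (0 : ℝ)).congr h.symm),
    integral_congr_ae h]
  simp

theorem Dmin_nonneg (P : Measure (X × Y)) [IsProbabilityMeasure P] (QX : Measure X)
    (QY : Measure Y) : 0 ≤ Dmin QX QY P := by
  unfold Dmin
  refine le_iInf fun π => le_iInf fun hπ => ?_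
  have := hπ.1
  exact aux_KL_nonneg π P

theorem aux_piM_zero {Z : Type*} [MeasurableSpace Z] (P : Measure Z) [IsProbabilityMeasure P]
    {A : Set (Fin 0 → Z)} (h : A.Nonempty) : (piM 0 P).real A = 1 := by
  have : A = Set.univ := by
    obtain ⟨x, hx⟩ := h
    ext y
    simp [Subsingleton.elim y x, hx]
  rw [this]
  simp

theorem aux_nonempty_of_real {Z : Type*} [MeasurableSpace Z] {P : Measure Z} {A : Set Z}
    (h : 0 < P.real A) : A.Nonempty := by
  rcases A.eq_empty_or_nonempty with rfl | h'
  · simp at h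
  · exact h'

/-- Lower bound, single-letterized. -/
theorem main_lower (P : Measure (X × Y)) [IsProbabilityMeasure P] (n : ℕ) :
    ∀ (A : Set (Fin n → X)) (B : Set (Fin n → Y)), MeasurableSet A → MeasurableSet B →
      0 < (piM n P).real (prodSet A B) →
      (-Real.log ((piM n (m1 P)).real A), -Real.log ((piM n (m2 P)).real B),
        -Real.log ((piM n P).real (prodSet A B))) ∈ KC P n := by
  induction n with
  | zero =>
    intro A B hA hB hpos
    have hAB := aux_piM_zero P (aux_nonempty_of_real hpos)
    have hA1 := aux_piM_zero (m1 P) (aux_nonempty_of_real (hpos.trans_le (prodSet_le1 P hA B)))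
    have hB1 := aux_piM_zero (m2 P) (aux_nonempty_of_real (hpos.trans_le (prodSet_le2 P A hB)))
    refine ⟨(0, 0, 0), subset_convexHull ℝ _ (KSet_mem P P 0 0 0 Measure.AbsolutelyContinuous.rfl
      Measure.AbsolutelyContinuous.rfl (aux_KL_self _) (aux_KL_self _) (aux_KL_self _).le), ?_⟩
    simp [hAB, hA1, hB1]
  | succ n ih =>
    intro A B hA hB hpos
    let u : X → ℝ := fun x => (piM n (m1 P)).real (secS A x)
    let v : Y → ℝ := fun y => (piM n (m2 P)).real (secS B y)
    let w : X × Y → ℝ := fun p => (piM n P).real (secS (prodSet A B) p)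
    have hAB := prodSet_meas hA hB
    have hw : Measurable w := secS_fun_meas P hAB
    have hu : Measurable u := secS_fun_meas (m1 P) hA
    have hv : Measurable v := secS_fun_meas (m2 P) hB
    have hwI : ∫ p, w p ∂P = (piM (n + 1) P).real (prodSet A B) := piM_succ P hAB
    have huI : ∫ p, u p ∂(m1 P) = (piM (n + 1) (m1 P)).real A := piM_succ (m1 P) hA
    have hvI : ∫ p, v p ∂(m2 P) = (piM (n + 1) (m2 P)).real B := piM_succ (m2 P) hB
    have hwu : ∀ p, w p ≤ u p.1 := fun p => by
      simp only [w, u, secS_prodSet]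
      exact prodSet_le1 P (secS_meas hA _) _
    have hwv : ∀ p, w p ≤ v p.2 := fun p => by
      simp only [w, v, secS_prodSet]
      exact prodSet_le2 P _ (secS_meas hB _)
    have hu1 : ∀ x, u x ≤ 1 := fun x => measureReal_le_one
    have hv1 : ∀ x, v x ≤ 1 := fun x => measureReal_le_one
    have hu0 : ∀ x, 0 ≤ u x := fun x => measureReal_nonneg
    have hv0 : ∀ x, 0 ≤ v x := fun x => measureReal_nonneg
    obtain ⟨Q, hQ, hac, hwpos, hwlog, hKL, C, hC, hCb⟩ := aux_tilt P w hw
      (fun _ => measureReal_nonneg) (fun _ => measureReal_le_one) (by rw [hwI]; exact hpos)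
    obtain ⟨hX, hXi⟩ := aux_bdd (m1 Q) (m1 P) C hC (fun S hS => by
      unfold m1
      rw [Measure.map_apply measurable_fst hS, Measure.map_apply measurable_fst hS]
      exact hCb _ (measurable_fst hS))
    obtain ⟨hY, hYi⟩ := aux_bdd (m2 Q) (m2 P) C hC (fun S hS => by
      unfold m2
      rw [Measure.map_apply measurable_snd hS, Measure.map_apply measurable_snd hS]
      exact hCb _ (measurable_snd hS))
    have hulog : Integrable (fun p : X × Y => Real.log (u p.1)) Q := by
      refine hwlog.mono (Real.measurable_log.comp (hu.comp measurable_fst)).aestronglyMeasurable ?_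
      filter_upwards [hwpos] with p hp
      rw [Real.norm_eq_abs, Real.norm_eq_abs,
        abs_of_nonpos (Real.log_nonpos (hu0 _) (hu1 _)),
        abs_of_nonpos (Real.log_nonpos hp.le ((hwu p).trans (hu1 _)))]
      exact neg_le_neg (Real.log_le_log hp (hwu p))
    have hvlog : Integrable (fun p : X × Y => Real.log (v p.2)) Q := by
      refine hwlog.mono (Real.measurable_log.comp (hv.comp measurable_snd)).aestronglyMeasurable ?_
      filter_upwards [hwpos] with p hp
      rw [Real.norm_eq_abs, Real.norm_eq_abs,
        abs_of_nonpos (Real.log_nonpos (hv0 _) (hv1 _)),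
        abs_of_nonpos (Real.log_nonpos hp.le ((hwv p).trans (hv1 _)))]
      exact neg_le_neg (Real.log_le_log hp (hwv p))
    have hlu := (Real.measurable_log.comp hu)
    have hlv := (Real.measurable_log.comp hv)
    have hulog' : Integrable (fun x => Real.log (u x)) (m1 Q) :=
      (integrable_map_measure hlu.aestronglyMeasurable measurable_fst.aemeasurable).2 hulog
    have hvlog' : Integrable (fun x => Real.log (v x)) (m2 Q) :=
      (integrable_map_measure hlv.aestronglyMeasurable measurable_snd.aemeasurable).2 hvlog
    have hueq : ∫ x, Real.log (u x) ∂(m1 Q) = ∫ p, Real.log (u p.1) ∂Q :=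
      integral_map measurable_fst.aemeasurable hlu.aestronglyMeasurable
    have hveq : ∫ x, Real.log (v x) ∂(m2 Q) = ∫ p, Real.log (v p.2) ∂Q :=
      integral_map measurable_snd.aemeasurable hlv.aestronglyMeasurable
    have hupos : ∀ᵐ x ∂(m1 Q), 0 < u x := by
      unfold m1
      rw [ae_map_iff measurable_fst.aemeasurable (measurableSet_lt measurable_const hu)]
      filter_upwards [hwpos] with p hp using hp.trans_le (hwu p)
    have hvpos : ∀ᵐ x ∂(m2 Q), 0 < v x := by
      unfold m2
      rw [ae_map_iff measurable_snd.aemeasurable (measurableSet_lt measurable_const hv)]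
      filter_upwards [hwpos] with p hp using hp.trans_le (hwv p)
    have hui : Integrable u (m1 P) := Integrable.of_bound (C := 1) hu.aestronglyMeasurable
      (ae_of_all _ fun x => by rw [Real.norm_eq_abs, abs_of_nonneg (hu0 x)]; exact hu1 x)
    have hvi : Integrable v (m2 P) := Integrable.of_bound (C := 1) hv.aestronglyMeasurable
      (ae_of_all _ fun x => by rw [Real.norm_eq_abs, abs_of_nonneg (hv0 x)]; exact hv1 x)
    have dv1 := aux_DV (m1 Q) (m1 P) hX hXi u hu hu0 hui hupos hulog'
    have dv2 := aux_DV (m2 Q) (m2 P) hY hYi v hv hv0 hvi hvpos hvlog'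
    rw [hueq, huI] at dv1
    rw [hveq, hvI] at dv2
    have hk := KSet_mem P Q _ _ _ hX hY (aux_KL_eq hX hXi) (aux_KL_eq hY hYi) hKL.le
    have hz := aux_mean3 Q (KC_convex P n) (fun p => -Real.log (u p.1)) (fun p => -Real.log (v p.2))
      (fun p => -Real.log (w p)) hulog.neg hvlog.neg hwlog.neg (by
        filter_upwards [hwpos] with p hp
        simp only [w, u, v, secS_prodSet] at hp ⊢
        exact ih _ _ (secS_meas hA _) (secS_meas hB _) hp)
    simp only [integral_neg] at hz
    refine KC_add P n hk hz ?_ ?_ ?_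
    · simp only; linarith
    · simp only; linarith
    · simp only; rw [hwI]; linarith

/-- Upper bound, single-letterized. -/
theorem main_upper (P : Measure (X × Y)) [IsProbabilityMeasure P] (n : ℕ) :
    ∀ (A : Set (Fin n → X)) (B : Set (Fin n → Y)), MeasurableSet A → MeasurableSet B →
      0 < (piM n (m1 P)).real A → 0 < (piM n (m2 P)).real B →
      ∀ c : ℝ, (piM n P).real (prodSet A B) < Real.exp (-c) →
      (-Real.log ((piM n (m1 P)).real A), -Real.log ((piM n (m2 P)).real B), c) ∈ HC P n := by
  induction n with
  | zero =>
    intro A B hA hB hA0 hB0 c hc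
    have hA1 := aux_piM_zero (m1 P) (aux_nonempty_of_real hA0)
    have hB1 := aux_piM_zero (m2 P) (aux_nonempty_of_real hB0)
    have hAB : (prodSet A B).Nonempty := by
      obtain ⟨x, hx⟩ := aux_nonempty_of_real hA0
      obtain ⟨y, hy⟩ := aux_nonempty_of_real hB0
      exact ⟨fun i => i.elim0, by rwa [Subsingleton.elim (fstv _) x],
        by rwa [Subsingleton.elim (sndv _) y]⟩
    rw [aux_piM_zero P hAB, Real.one_lt_exp_iff] at hc
    refine ⟨(0, 0, 0), subset_convexHull ℝ _ (HSet_mem P (m1 P) (m2 P) 0 0 0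
      Measure.AbsolutelyContinuous.rfl Measure.AbsolutelyContinuous.rfl (aux_KL_self _)
      (aux_KL_self _) (Dmin_nonneg _ _ _)), ?_⟩
    simp [hA1, hB1]
    linarith
  | succ n ih =>
    intro A B hA hB hA0 hB0 c hc
    let u : X → ℝ := fun x => (piM n (m1 P)).real (secS A x)
    let v : Y → ℝ := fun y => (piM n (m2 P)).real (secS B y)
    let w : X × Y → ℝ := fun p => (piM n P).real (secS (prodSet A B) p)
    have hAB := prodSet_meas hA hB
    have hw : Measurable w := secS_fun_meas P hAB
    have hu : Measurable u := secS_fun_meas (m1 P) hA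
    have hv : Measurable v := secS_fun_meas (m2 P) hB
    have hwI : ∫ p, w p ∂P = (piM (n + 1) P).real (prodSet A B) := piM_succ P hAB
    have huI : ∫ p, u p ∂(m1 P) = (piM (n + 1) (m1 P)).real A := piM_succ (m1 P) hA
    have hvI : ∫ p, v p ∂(m2 P) = (piM (n + 1) (m2 P)).real B := piM_succ (m2 P) hB
    have hw0 : ∀ p, 0 ≤ w p := fun _ => measureReal_nonneg
    have hw1 : ∀ p, w p ≤ 1 := fun _ => measureReal_le_one
    have hwi : Integrable w P := Integrable.of_bound (C := 1) hw.aestronglyMeasurable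
      (ae_of_all _ fun x => by rw [Real.norm_eq_abs, abs_of_nonneg (hw0 x)]; exact hw1 x)
    obtain ⟨QX, hQX, hacX, hupos, hulog, hKLX, -⟩ := aux_tilt (m1 P) u hu
      (fun _ => measureReal_nonneg) (fun _ => measureReal_le_one) (by rw [huI]; exact hA0)
    obtain ⟨QY, hQY, hacY, hvpos, hvlog, hKLY, -⟩ := aux_tilt (m2 P) v hv
      (fun _ => measureReal_nonneg) (fun _ => measureReal_le_one) (by rw [hvI]; exact hB0)
    have hlu := (Real.measurable_log.comp hu)
    have hlv := (Real.measurable_log.comp hv)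
    -- the mean along an arbitrary coupling
    have hmean : ∀ π ∈ couplings QX QY, ∀ ε : ℝ, 0 < ε →
        (-∫ x, Real.log (u x) ∂QX, -∫ y, Real.log (v y) ∂QY,
          -∫ p, Real.log (w p + ε) ∂π) ∈ HC P n := by
      rintro π ⟨hπ, h1, h2⟩ ε hε
      have hueq : ∫ x, Real.log (u x) ∂QX = ∫ p, Real.log (u p.1) ∂π := by
        rw [← h1]
        exact integral_map measurable_fst.aemeasurable hlu.aestronglyMeasurable
      have hveq : ∫ x, Real.log (v x) ∂QY = ∫ p, Real.log (v p.2) ∂π := by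
        rw [← h2]
        exact integral_map measurable_snd.aemeasurable hlv.aestronglyMeasurable
      have hui : Integrable (fun p : X × Y => Real.log (u p.1)) π := by
        rw [← h1] at hulog
        exact (integrable_map_measure hlu.aestronglyMeasurable measurable_fst.aemeasurable).1 hulog
      have hvi : Integrable (fun p : X × Y => Real.log (v p.2)) π := by
        rw [← h2] at hvlog
        exact (integrable_map_measure hlv.aestronglyMeasurable measurable_snd.aemeasurable).1 hvlog
      have hup : ∀ᵐ p ∂π, 0 < u p.1 := by
        rw [← h1] at hupos
        exact ae_of_ae_map measurable_fst.aemeasurable hupos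
      have hvp : ∀ᵐ p ∂π, 0 < v p.2 := by
        rw [← h2] at hvpos
        exact ae_of_ae_map measurable_snd.aemeasurable hvpos
      have hz := aux_mean3 π (HC_convex P n) (fun p => -Real.log (u p.1))
        (fun p => -Real.log (v p.2)) (fun p => -Real.log (w p + ε)) hui.neg hvi.neg
        (aux_sec_log_int π w hw hw0 hw1 ε hε).neg (by
          filter_upwards [hup, hvp] with p hp1 hp2
          refine ih _ _ (secS_meas hA _) (secS_meas hB _) hp1 hp2 _ ?_
          rw [neg_neg, Real.exp_log (by linarith [hw0 p]), ← secS_prodSet]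
          simp only [w]
          linarith)
      simp only [integral_neg] at hz
      rwa [hueq, hveq]
    -- it suffices to find a suitable coupling
    suffices hsuff : ∃ π ∈ couplings QX QY, ∃ ε : ℝ, 0 < ε ∧ ∃ d : ℝ,
        (d : EReal) ≤ Dmin QX QY P ∧ c ≤ d + -∫ p, Real.log (w p + ε) ∂π by
      obtain ⟨π, hπ, ε, hε, d, hd, hcd⟩ := hsuff
      refine HC_add P n (HSet_mem P QX QY _ _ d hacX hacY hKLX hKLY hd) (hmean π hπ ε hε) ?_ ?_ hcd
      · simp only; rw [huI]; ring
      · simp only; rw [hvI]; ring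
    by_cases hD : Dmin QX QY P = ⊤
    · refine ⟨QX.prod QY, ⟨inferInstance, by simp, by simp⟩, 1, one_pos,
        c + ∫ p, Real.log (w p + 1) ∂(QX.prod QY), by rw [hD]; exact le_top, by linarith⟩
    · have hD0 := Dmin_nonneg P QX QY
      obtain ⟨D, hDeq⟩ : ∃ D : ℝ, Dmin QX QY P = (D : EReal) :=
        ⟨(Dmin QX QY P).toReal, (EReal.coe_toReal hD
          (ne_bot_of_le_ne_bot (by simp) hD0)).symm⟩
      rw [← hwI] at hc
      set W := ∫ p, w p ∂P with hW
      have hW0 : 0 ≤ W := integral_nonneg hw0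
      set g := (W + Real.exp (-c)) / 2 with hg
      have hgW : W < g := by rw [hg]; linarith
      have hgc : g < Real.exp (-c) := by rw [hg]; linarith
      have hlg : Real.log g < -c := by
        rw [Real.log_lt_iff_lt_exp (by linarith)]; exact hgc
      have hlt : Dmin QX QY P < ((D + (-c - Real.log g) : ℝ) : EReal) := by
        rw [hDeq]
        exact_mod_cast (by linarith : D < D + (-c - Real.log g))
      have hlt' := hlt
      unfold Dmin at hlt'
      simp only [iInf_lt_iff] at hlt'
      obtain ⟨π, hπ, hKL⟩ := hlt'
      refine ⟨π, hπ, g - W, by linarith, D, hDeq.ge, ?_⟩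
      have hpr : IsProbabilityMeasure π := hπ.1
      by_cases hcase : π ≪ P ∧ Integrable (fun x => Real.log (π.rnDeriv P x).toReal) π
      · rw [aux_KL_eq hcase.1 hcase.2] at hKL
        have hKL' : ∫ x, Real.log (π.rnDeriv P x).toReal ∂π < D + (-c - Real.log g) := by
          exact_mod_cast hKL
        have dv := aux_DV π P hcase.1 hcase.2 (fun p => w p + (g - W)) (hw.add_const _)
          (fun p => by linarith [hw0 p]) (hwi.add (integrable_const _))
          (ae_of_all _ fun p => by linarith [hw0 p])
          (aux_sec_log_int π w hw hw0 hw1 _ (by linarith))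
        rw [integral_add hwi (integrable_const _)] at dv
        simp only [integral_const, probReal_univ, one_smul] at dv
        rw [← hW, show W + (g - W) = g by ring] at dv
        linarith
      · unfold KL at hKL
        rw [if_neg hcase] at hKL
        exact absurd hKL (by simp)

theorem lce2_le_of_mem (P : Measure (X × Y)) {z : ℝ × ℝ × ℝ}
    (hz : z ∈ convexHull ℝ (KSet P)) : lce2 (phiL P) z.1 z.2.1 ≤ (z.2.2 : EReal) := by
  obtain ⟨q, y, hq, hq1, hy, h1, h2, h3⟩ := aux_carath hz
  unfold lce2
  refine iInf_le_of_le q <| iInf_le_of_le (fun i => ((y i).1, (y i).2.1)) <| iInf_le_of_le hq <|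
    iInf_le_of_le hq1 <| iInf_le_of_le (fun i => ⟨(hy i).1, (hy i).2.1⟩) <| iInf_le_of_le h1 <|
    iInf_le_of_le h2 ?_
  rw [← h3]
  have : ((∑ i, q i * (y i).2.2 : ℝ) : EReal) = ∑ i, (q i : EReal) * ((y i).2.2 : EReal) := by
    simp [Fin.sum_univ_four]
  rw [this]
  exact Finset.sum_le_sum fun i _ =>
    mul_le_mul_of_nonneg_left (hy i).2.2 (by exact_mod_cast hq i)

theorem le_uce2_of_mem (P : Measure (X × Y)) {z : ℝ × ℝ × ℝ}
    (hz : z ∈ convexHull ℝ (HSet P)) : (z.2.2 : EReal) ≤ uce2 (phiU P) z.1 z.2.1 := by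
  obtain ⟨q, y, hq, hq1, hy, h1, h2, h3⟩ := aux_carath hz
  unfold uce2
  refine le_iSup_of_le q <| le_iSup_of_le (fun i => ((y i).1, (y i).2.1)) <| le_iSup_of_le hq <|
    le_iSup_of_le hq1 <| le_iSup_of_le (fun i => ⟨(hy i).1, (hy i).2.1⟩) <| le_iSup_of_le h1 <|
    le_iSup_of_le h2 ?_
  rw [← h3]
  have : ((∑ i, q i * (y i).2.2 : ℝ) : EReal) = ∑ i, (q i : EReal) * ((y i).2.2 : EReal) := by
    simp [Fin.sum_univ_four]
  rw [this]
  exact Finset.sum_le_sum fun i _ =>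
    mul_le_mul_of_nonneg_left (hy i).2.2 (by exact_mod_cast hq i)

/-- Value of the exponent when the probability is positive. -/
theorem aux_exponent_pos {Z : Type*} [MeasurableSpace Z] (μ : Measure Z) [IsProbabilityMeasure μ]
    (n : ℕ) {S : Set Z} (h : 0 < μ.real S) :
    -((((n : ℝ)⁻¹ : ℝ) : EReal) * elog (μ S)) = (((n : ℝ)⁻¹ * -Real.log (μ.real S) : ℝ) : EReal) := by
  have h0 : μ S ≠ 0 := by
    intro h'
    simp [measureReal_def, h'] at h
  unfold elog
  rw [if_neg h0, if_neg (measure_ne_top μ S), ← measureReal_def, ← EReal.coe_mul, ← EReal.coe_neg]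
  congr 1
  ring

theorem aux_exponent_zero {Z : Type*} [MeasurableSpace Z] (μ : Measure Z)
    (n : ℕ) (hn : 1 ≤ n) {S : Set Z} (h : μ S = 0) :
    -((((n : ℝ)⁻¹ : ℝ) : EReal) * elog (μ S)) = ⊤ := by
  have hn' : (0 : ℝ) < (n : ℝ)⁻¹ := by
    have : (0 : ℝ) < n := by exact_mod_cast hn
    positivity
  unfold elog
  rw [if_pos h, EReal.coe_mul_bot_of_pos hn', EReal.neg_bot]

/-- Pointwise strong small-set expansion bounds;
Theorem `thm:strongsse-2`. -/
theorem statement11 [TopologicalSpace X] [PolishSpace X] [BorelSpace X]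
    [TopologicalSpace Y] [PolishSpace Y] [BorelSpace Y]
    (P : Measure (X × Y)) [IsProbabilityMeasure P]
    (hndX : ∀ x : X, m1 P ≠ Measure.dirac x) (hndY : ∀ y : Y, m2 P ≠ Measure.dirac y)
    (n : ℕ) (hn : 1 ≤ n)
    (A : Set (Fin n → X)) (B : Set (Fin n → Y))
    (hA : MeasurableSet A) (hB : MeasurableSet B)
    (α β : ℝ)
    (hαA : piM n (m1 P) A = ENNReal.ofReal (Real.exp (-((n : ℝ) * α))))
    (hβB : piM n (m2 P) B = ENNReal.ofReal (Real.exp (-((n : ℝ) * β)))) :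
    (ThetaL P α β ≤ -((((n : ℝ)⁻¹ : ℝ) : EReal) * elog (piM n P (prodSet A B)))) ∧
    (0 < α → 0 < β →
      -((((n : ℝ)⁻¹ : ℝ) : EReal) * elog (piM n P (prodSet A B))) ≤ uce2 (phiU P) α β) ∧
    (β = 0 →
      -((((n : ℝ)⁻¹ : ℝ) : EReal) * elog (piM n P (prodSet A B))) ≤ (α : EReal)) ∧
    (α = 0 →
      -((((n : ℝ)⁻¹ : ℝ) : EReal) * elog (piM n P (prodSet A B))) ≤ (β : EReal)) := by
  have hn0 : (0 : ℝ) < n := by exact_mod_cast hn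
  have hAr : (piM n (m1 P)).real A = Real.exp (-((n : ℝ) * α)) := by
    rw [measureReal_def, hαA, ENNReal.toReal_ofReal (Real.exp_pos _).le]
  have hBr : (piM n (m2 P)).real B = Real.exp (-((n : ℝ) * β)) := by
    rw [measureReal_def, hβB, ENNReal.toReal_ofReal (Real.exp_pos _).le]
  refine ⟨?_, ?_, ?_, ?_⟩
  · rcases (measureReal_nonneg (μ := piM n P) (s := prodSet A B)).lt_or_eq with hpos | hz
    · obtain ⟨h, hh, h1, h2, h3⟩ := main_lower P n A B hA hB hpos
      rw [aux_exponent_pos _ n hpos]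
      simp only [hAr, hBr, Real.log_exp, neg_neg] at h1 h2 h3
      unfold ThetaL
      refine iInf_le_of_le h.1 <| iInf_le_of_le h.2.1 <|
        iInf_le_of_le (le_of_mul_le_mul_left h1 hn0) <|
        iInf_le_of_le (le_of_mul_le_mul_left h2 hn0) <| (lce2_le_of_mem P hh).trans ?_
      rw [EReal.coe_le_coe_iff, inv_mul_eq_div, le_div_iff₀ hn0]
      linarith
    · rw [aux_exponent_zero _ n hn ((measureReal_eq_zero_iff (measure_ne_top _ _)).1 hz.symm)]
      exact le_top
  · intro _ _
    have key : ∀ c : ℝ, (piM n P).real (prodSet A B) < Real.exp (-((n : ℝ) * c)) →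
        (c : EReal) ≤ uce2 (phiU P) α β := by
      intro c hc
      obtain ⟨h, hh, h1, h2, h3⟩ := main_upper P n A B hA hB (by rw [hAr]; exact Real.exp_pos _)
        (by rw [hBr]; exact Real.exp_pos _) _ hc
      simp only [hAr, hBr, Real.log_exp, neg_neg] at h1 h2 h3
      have e1 : α = h.1 := mul_left_cancel₀ hn0.ne' h1
      have e2 : β = h.2.1 := mul_left_cancel₀ hn0.ne' h2
      have e3 : c ≤ h.2.2 := le_of_mul_le_mul_left h3 hn0
      rw [e1, e2]
      exact (EReal.coe_le_coe_iff.2 e3).trans (le_uce2_of_mem P hh)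
    rcases (measureReal_nonneg (μ := piM n P) (s := prodSet A B)).lt_or_eq with hpos | hz
    · rw [aux_exponent_pos _ n hpos]
      refine EReal.ge_of_forall_gt_iff_ge.1 ?_
      intro c hc
      apply key
      rw [EReal.coe_lt_coe_iff, inv_mul_eq_div, lt_div_iff₀ hn0] at hc
      rw [← Real.log_lt_iff_lt_exp hpos]
      linarith
    · rw [aux_exponent_zero _ n hn ((measureReal_eq_zero_iff (measure_ne_top _ _)).1 hz.symm)]
      refine EReal.ge_of_forall_gt_iff_ge.1 ?_
      intro c _
      apply key
      rw [← hz]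
      exact Real.exp_pos _
  · intro hβ
    have hfull : piM n P (prodSet A B) = piM n (m1 P) A := by
      rw [piM_m1 n P hA]
      have hB1 : piM n P (sndv ⁻¹' B) = 1 := by
        rw [← piM_m2 n P hB, hβB, hβ]; simp
      have : ∀ᵐ z ∂(piM n P), z ∈ sndv ⁻¹' B := by
        change sndv ⁻¹' B ∈ ae (piM n P)
        rw [mem_ae_iff, prob_compl_eq_zero_iff (sndv_meas hB)]; exact hB1
      refine measure_congr ?_
      filter_upwards [this] with z hz
      exact propext ⟨fun h => h.1, fun h => ⟨h, hz⟩⟩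
    have hr : (piM n P).real (prodSet A B) = Real.exp (-((n : ℝ) * α)) := by
      rw [measureReal_def, hfull, ← measureReal_def, hAr]
    rw [aux_exponent_pos _ n (by rw [hr]; exact Real.exp_pos _), hr, Real.log_exp, neg_neg,
      inv_mul_cancel_left₀ hn0.ne']
  · intro hα
    have hfull : piM n P (prodSet A B) = piM n (m2 P) B := by
      rw [piM_m2 n P hB]
      have hA1 : piM n P (fstv ⁻¹' A) = 1 := by
        rw [← piM_m1 n P hA, hαA, hα]; simp
      have : ∀ᵐ z ∂(piM n P), z ∈ fstv ⁻¹' A := by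
        change fstv ⁻¹' A ∈ ae (piM n P)
        rw [mem_ae_iff, prob_compl_eq_zero_iff (fstv_meas hA)]; exact hA1
      refine measure_congr ?_
      filter_upwards [this] with z hz
      exact propext ⟨fun h => h.2, fun h => ⟨hz, h⟩⟩
    have hr : (piM n P).real (prodSet A B) = Real.exp (-((n : ℝ) * β)) := by
      rw [measureReal_def, hfull, ← measureReal_def, hBr]
    rw [aux_exponent_pos _ n (by rw [hr]; exact Real.exp_pos _), hr, Real.log_exp, neg_neg,
      inv_mul_cancel_left₀ hn0.ne']

end BL
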